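/- Let 𝕂 = ℚ(√d) be a real quadratic field of class number one with d > 1 squarefree, d ≡ 3 (mod 4), and fix 𝒞 ∈ ℕ. Then there is a constant c = c(𝒞, 𝕂) such that for all N ≥ 3, |∑_{𝔰∈ℙ} Ψ(𝔰) − (1/log N)·∑_{𝔫∈ℐ} Λ(𝔫)·Ψ(𝔫)| ≤ c · N·log log N / log² N. -/

import Mathlib

open NumberField

open scoped Classical

set_option synthInstance.maxHeartbeats 1000000
set_option maxHeartbeats 1000000

/-- The weight `f(x) = (exp(−πx²) − exp(−2πx²))^𝒞`. -/
noncomputable def fwt (C : ℕ) (x : ℝ) : ℝ :=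
  (Real.exp (-Real.pi * x^2) - Real.exp (-2 * Real.pi * x^2)) ^ C

/-- The smooth weight `Ψ(𝔫) = ∑_{k ∈ 𝒪, (k) = 𝔫} f(σ₁(k)/√N) f(σ₂(k)/√N)`,
where `σ₁` is the inclusion `K ⊆ ℝ` and `σ₂` the second real embedding. -/
noncomputable def PsiW (K : Subfield ℝ) [NumberField K] (σ₂ : K →+* ℝ) (C : ℕ) (N : ℝ)
    (n : Ideal (𝓞 K)) : ℝ :=
  ∑' k : 𝓞 K, if Ideal.span {k} = n then
    fwt C (((k : K) : ℝ) / Real.sqrt N) * fwt C (σ₂ (k : K) / Real.sqrt N) else 0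

/-- The von Mangoldt function for ideals: `Λ(𝔫) = log 𝒩(𝔭)` if `𝔫 = 𝔭^k` with `𝔭` a
nonzero prime ideal and `k ≥ 1`, and `Λ(𝔫) = 0` otherwise. -/
noncomputable def LambdaIdeal (K : Subfield ℝ) [NumberField K] (n : Ideal (𝓞 K)) : ℝ :=
  if h : ∃ p : Ideal (𝓞 K), (∃ k : ℕ, 1 ≤ k ∧ n = p ^ k) ∧ p.IsPrime ∧ p ≠ ⊥ then
    Real.log (Ideal.absNorm h.choose) else 0


/-!
Multiplying a generator of an ideal by a unit moves `log |σ₁ / σ₂|` by a lattice step, and `fwt`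
is small near `0` and `∞`, so `PsiW` is bounded by a function of `y = 𝒩(𝔫)/N` alone; the quadratic
vanishing of `fwt` at `0` leaves room for the factor `(1 + |log y|)²` on the left.

At a prime `𝔭` the two sums differ by `Ψ(𝔭) (log N - log 𝒩(𝔭)) / log N`, and since
`log N ≪ log 𝒩(𝔭) (1 + |log y|)`, the two logarithmic factors turn this into
`log 𝒩(𝔭) · min(1, y^{-3/2}) / log² N`. Chebyshev's bound for the rational primes below `𝔭`, summed
over dyadic ranges of `y`, gives `O(N / log² N)`. On the powers `𝔭^k` with `k ≥ 2` one of these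
factors gains `1 / log N`, and what remains is at most a constant times
`N · ∑ k log² 𝒩(𝔭) / 𝒩(𝔭)^k`, which is `O(N)`.
-/

section Decay

/-- The majorant `min(1, y^{-3/2})` of the radial part of `Ψ`, as a function of `y = 𝒩(𝔫)/N`. -/
noncomputable def decay (y : ℝ) : ℝ := min 1 (y ^ (-(3 / 2) : ℝ))

variable {y : ℝ}

lemma decay_nonneg (hy : 0 ≤ y) : 0 ≤ decay y := le_min zero_le_one (Real.rpow_nonneg hy _)

lemma decay_pos (hy : 0 < y) : 0 < decay y := lt_min zero_lt_one (Real.rpow_pos_of_pos hy _)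

lemma decay_eq_one (hy : 0 < y) (hy1 : y ≤ 1) : decay y = 1 :=
  min_eq_left (Real.one_le_rpow_of_pos_of_le_one_of_nonpos hy hy1 (by norm_num))

lemma decay_eq_rpow (hy : 1 ≤ y) : decay y = y ^ (-(3 / 2) : ℝ) :=
  min_eq_right (Real.rpow_le_one_of_one_le_of_nonpos hy (by norm_num))

lemma inv_sq_le_decay (hy : 1 ≤ y) : 1 / y ^ 2 ≤ decay y := by
  rw [decay_eq_rpow hy, one_div, ← Real.rpow_natCast, ← Real.rpow_neg (by linarith)]
  exact Real.rpow_le_rpow_of_exponent_le hy (by norm_num)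

lemma decay_le_inv (hy : 0 < y) : decay y ≤ 1 / y := by
  rcases le_total y 1 with hy1 | hy1
  · exact (min_le_left _ _).trans ((one_le_div hy).mpr hy1)
  · rw [decay_eq_rpow hy1, one_div, ← Real.rpow_neg_one]
    exact Real.rpow_le_rpow_of_exponent_le hy1 (by norm_num)

lemma log_div_sq_le_decay (hy : 1 ≤ y) : Real.log y / y ^ 2 ≤ 2 * decay y := by
  have hy0 : 0 < y := by linarith
  have hlog : Real.log y ≤ 2 * y ^ (1 / 2 : ℝ) :=
    (Real.log_le_rpow_div hy0.le one_half_pos).trans_eq (by ring)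
  calc Real.log y / y ^ 2 ≤ 2 * y ^ (1 / 2 : ℝ) / y ^ 2 := by gcongr
    _ = 2 * decay y := by
      rw [decay_eq_rpow hy, mul_div_assoc, ← Real.rpow_natCast, ← Real.rpow_sub hy0]
      norm_num

lemma exists_four_pow_decay_le (y : ℝ) :
    ∃ j : ℕ, y ≤ 4 ^ j ∧ decay y ≤ 8 * (1 / 8) ^ j := by
  rcases le_total y 1 with hy1 | hy1
  · exact ⟨0, by simpa using hy1, (min_le_left _ _).trans (by norm_num)⟩
  · obtain ⟨m, hmy, hym⟩ := exists_nat_pow_near hy1 (by norm_num : (1 : ℝ) < 4)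
    have hfour : ((4 : ℝ) ^ m) ^ (-(3 / 2) : ℝ) = (1 / 8) ^ m := by
      rw [← Real.rpow_natCast_mul (by norm_num), mul_comm, Real.rpow_mul_natCast (by norm_num),
        show (4 : ℝ) = 2 ^ (2 : ℝ) by norm_num, ← Real.rpow_mul (by norm_num)]
      norm_num [Real.rpow_neg]
    refine ⟨m + 1, hym.le, ?_⟩
    calc decay y ≤ ((4 : ℝ) ^ m) ^ (-(3 / 2) : ℝ) := by
          rw [decay_eq_rpow hy1]
          exact Real.rpow_le_rpow_of_nonpos (by positivity) hmy (by norm_num)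
      _ = 8 * (1 / 8) ^ (m + 1) := by rw [hfour, pow_succ]; ring

lemma sum_mul_decay_le {ι : Type*} (S : Finset ι) (a y : ι → ℝ) (B : ℝ) (ha : ∀ i, 0 ≤ a i)
    (hB : ∀ x, 0 ≤ x → ∑ i ∈ S with y i ≤ x, a i ≤ B * x) :
    ∑ i ∈ S, a i * decay (y i) ≤ 16 * B := by
  choose r hyr hdecay using fun i => exists_four_pow_decay_le (y i)
  have hB0 : 0 ≤ B := by
    simpa using (Finset.sum_nonneg fun i _ => ha i).trans (hB 1 zero_le_one)
  have hfiber (j : ℕ) : ∑ i ∈ S with r i = j, a i * decay (y i) ≤ 8 * B * (1 / 2) ^ j :=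
    calc ∑ i ∈ S with r i = j, a i * decay (y i)
        ≤ ∑ i ∈ S with r i = j, a i * (8 * (1 / 8) ^ j) := by
          refine Finset.sum_le_sum fun i hi => mul_le_mul_of_nonneg_left ?_ (ha i)
          rw [← (Finset.mem_filter.mp hi).2]
          exact hdecay i
      _ = (∑ i ∈ S with r i = j, a i) * (8 * (1 / 8) ^ j) := by rw [Finset.sum_mul]
      _ ≤ (∑ i ∈ S with y i ≤ 4 ^ j, a i) * (8 * (1 / 8) ^ j) := by
          gcongr with i
          · exact fun i _ _ => ha i
          · rintro rfl; exact hyr i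
      _ ≤ B * 4 ^ j * (8 * (1 / 8) ^ j) := by gcongr; exact hB _ (by positivity)
      _ = 8 * B * (4 * (1 / 8)) ^ j := by rw [mul_pow]; ring
      _ = 8 * B * (1 / 2) ^ j := by norm_num
  calc ∑ i ∈ S, a i * decay (y i)
      = ∑ j ∈ S.image r, ∑ i ∈ S with r i = j, a i * decay (y i) :=
        (Finset.sum_fiberwise_of_maps_to (fun _ => Finset.mem_image_of_mem r) _).symm
    _ ≤ ∑ j ∈ S.image r, 8 * B * (1 / 2) ^ j := Finset.sum_le_sum fun j _ => hfiber j
    _ = 8 * B * ∑ j ∈ S.image r, (1 / 2 : ℝ) ^ j := by rw [Finset.mul_sum]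
    _ ≤ 8 * B * 2 := by
        gcongr
        exact (summable_geometric_two.sum_le_tsum _ fun _ _ => by positivity).trans_eq
          tsum_geometric_two
    _ = 16 * B := by ring

end Decay

section Weight

lemma fwt_base_eq (x : ℝ) :
    Real.exp (-Real.pi * x ^ 2) - Real.exp (-2 * Real.pi * x ^ 2) =
      Real.exp (-(Real.pi * x ^ 2)) * (1 - Real.exp (-(Real.pi * x ^ 2))) := by
  rw [mul_sub, mul_one, ← Real.exp_add]
  ring_nf

lemma exp_neg_pi_mul_sq_le_one (x : ℝ) : Real.exp (-(Real.pi * x ^ 2)) ≤ 1 :=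
  Real.exp_le_one_iff.mpr (neg_nonpos.mpr (by positivity))

lemma fwt_nonneg (C : ℕ) (x : ℝ) : 0 ≤ fwt C x := by
  rw [fwt, fwt_base_eq]
  exact pow_nonneg
    (mul_nonneg (Real.exp_nonneg _) (sub_nonneg.mpr (exp_neg_pi_mul_sq_le_one x))) C

variable {C : ℕ}

lemma fwt_le_mul (hC : 0 < C) (x : ℝ) :
    fwt C x ≤ Real.exp (-(Real.pi * x ^ 2)) * (1 - Real.exp (-(Real.pi * x ^ 2))) := by
  have hpos := Real.exp_pos (-(Real.pi * x ^ 2))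
  have hle := exp_neg_pi_mul_sq_le_one x
  rw [fwt, fwt_base_eq]
  exact pow_le_of_le_one (by nlinarith) (by nlinarith) hC.ne'

lemma fwt_le_four_mul_sq (hC : 0 < C) (x : ℝ) : fwt C x ≤ 4 * x ^ 2 := by
  have hle := exp_neg_pi_mul_sq_le_one x
  have hlinear := Real.add_one_le_exp (-(Real.pi * x ^ 2))
  calc fwt C x ≤ 1 - Real.exp (-(Real.pi * x ^ 2)) := (fwt_le_mul hC x).trans (by nlinarith)
    _ ≤ Real.pi * x ^ 2 := by linarith
    _ ≤ 4 * x ^ 2 := by gcongr; exact Real.pi_le_four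

lemma fwt_mul_sq_pow_le (hC : 0 < C) (x : ℝ) (n : ℕ) : fwt C x * (x ^ 2) ^ n ≤ n.factorial := by
  set z := Real.pi * x ^ 2
  have hxz : x ^ 2 ≤ z := le_mul_of_one_le_left (sq_nonneg x) (by linarith [Real.pi_gt_three])
  have hz0 : 0 ≤ z := (sq_nonneg x).trans hxz
  have hpow : z ^ n ≤ n.factorial * Real.exp z := by
    rw [← div_le_iff₀' (by positivity)]
    exact Real.pow_div_factorial_le_exp z hz0 n
  have hexp : fwt C x ≤ Real.exp (-z) := by
    have := Real.exp_pos (-z)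
    exact (fwt_le_mul hC x).trans (by nlinarith)
  calc fwt C x * (x ^ 2) ^ n ≤ Real.exp (-z) * (n.factorial * Real.exp z) := by
        gcongr
        exact (pow_le_pow_left₀ (sq_nonneg x) hxz n).trans hpow
    _ = n.factorial := by rw [mul_left_comm, ← Real.exp_add, neg_add_cancel, Real.exp_zero, mul_one]

lemma one_add_abs_log_sq_le_of_one_le {y : ℝ} (hy : 1 ≤ y) :
    (1 + |Real.log y|) ^ 2 ≤ 4 * y := by
  have hlog : |Real.log y| = 2 * Real.log √y := by
    rw [abs_of_nonneg (Real.log_nonneg hy), Real.log_sqrt (by linarith)]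
    ring
  have hsqrt : 1 + |Real.log y| ≤ 2 * √y := by
    linarith [Real.log_le_sub_one_of_pos (Real.sqrt_pos.mpr (by linarith : 0 < y)),
      Real.one_le_sqrt.mpr hy]
  calc (1 + |Real.log y|) ^ 2 ≤ (2 * √y) ^ 2 := by gcongr
    _ = 4 * y := by rw [mul_pow, Real.sq_sqrt (by linarith)]; norm_num

lemma one_add_abs_log_sq_le_of_le_one {y : ℝ} (hy : 0 < y) (hy1 : y ≤ 1) :
    (1 + |Real.log y|) ^ 2 ≤ 4 * y⁻¹ := by
  have := one_add_abs_log_sq_le_of_one_le ((one_le_inv₀ hy).mpr hy1)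
  rwa [Real.log_inv, abs_neg] at this

lemma mul_one_add_abs_log_sq_le_decay {G y m : ℝ} (hy : 0 < y) (hm : 0 ≤ m)
    (hsmall : G ≤ 4 * (y * m)) (hlarge : G * y ^ 3 ≤ 2 * m) :
    G * (1 + |Real.log y|) ^ 2 ≤ 16 * decay y * m := by
  rcases le_total y 1 with hy1 | hy1
  · calc G * (1 + |Real.log y|) ^ 2 ≤ 4 * (y * m) * (4 * y⁻¹) := by
          gcongr
          exact one_add_abs_log_sq_le_of_le_one hy hy1
      _ = 16 * decay y * m := by rw [decay_eq_one hy hy1]; field_simp; ring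
  · calc G * (1 + |Real.log y|) ^ 2 ≤ 2 * m / y ^ 3 * (4 * y) := by
          gcongr
          · rwa [le_div_iff₀ (by positivity)]
          · exact one_add_abs_log_sq_le_of_one_le hy1
      _ = 8 * (1 / y ^ 2) * m := by field_simp; ring
      _ ≤ 16 * decay y * m := by
          have := decay_nonneg hy.le
          gcongr
          · norm_num
          · exact inv_sq_le_decay hy1

lemma fwt_mul_fwt_le_of_abs_le (hC : 0 < C) {s t N : ℝ} (hs : s ≠ 0) (hst : |s| ≤ |t|)
    (hN : 0 < N) :
    fwt C (s / √N) * fwt C (t / √N) * (1 + |Real.log (|s| * |t| / N)|) ^ 2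
      ≤ 16 * decay (|s| * |t| / N) * Real.exp (-|Real.log (|s| / |t|)|) := by
  have hs0 : 0 < |s| := abs_pos.mpr hs
  have ht0 : 0 < |t| := hs0.trans_le hst
  have hratio : Real.exp (-|Real.log (|s| / |t|)|) = |s| / |t| := by
    rw [abs_of_nonpos (Real.log_nonpos (by positivity) (div_le_one_of_le₀ hst ht0.le)), neg_neg,
      Real.exp_log (by positivity)]
  have hsq (r : ℝ) : (r / √N) ^ 2 = |r| ^ 2 / N := by rw [div_pow, Real.sq_sqrt hN.le, sq_abs]
  have := fwt_nonneg C (s / √N)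
  have := fwt_nonneg C (t / √N)
  rw [hratio]
  refine mul_one_add_abs_log_sq_le_decay (by positivity) (by positivity) ?_ ?_
  · calc fwt C (s / √N) * fwt C (t / √N) ≤ 4 * (|s| ^ 2 / N) * 1 := by
          gcongr
          · exact hsq s ▸ fwt_le_four_mul_sq hC (s / √N)
          · simpa using fwt_mul_sq_pow_le hC (t / √N) 0
      _ = 4 * (|s| * |t| / N * (|s| / |t|)) := by field_simp
  · have hfs1 : fwt C (s / √N) * (|s| ^ 2 / N) ≤ 1 := by
      simpa [hsq] using fwt_mul_sq_pow_le hC (s / √N) 1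
    have hft2 : fwt C (t / √N) * (|t| ^ 2 / N) ^ 2 ≤ 2 := by
      simpa [hsq] using fwt_mul_sq_pow_le hC (t / √N) 2
    calc fwt C (s / √N) * fwt C (t / √N) * (|s| * |t| / N) ^ 3
        = fwt C (s / √N) * (|s| ^ 2 / N) * (fwt C (t / √N) * (|t| ^ 2 / N) ^ 2) * (|s| / |t|) := by
          field_simp
      _ ≤ 1 * 2 * (|s| / |t|) := by gcongr
      _ = 2 * (|s| / |t|) := by ring

lemma fwt_mul_fwt_le (hC : 0 < C) {s t N : ℝ} (hs : s ≠ 0) (ht : t ≠ 0) (hN : 0 < N) :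
    fwt C (s / √N) * fwt C (t / √N) * (1 + |Real.log (|s| * |t| / N)|) ^ 2
      ≤ 16 * decay (|s| * |t| / N) * Real.exp (-|Real.log (|s| / |t|)|) := by
  rcases le_total |s| |t| with hst | hts
  · exact fwt_mul_fwt_le_of_abs_le hC hs hst hN
  · have := fwt_mul_fwt_le_of_abs_le hC ht hts hN
    rwa [mul_comm |t| |s|, mul_comm (fwt C (t / √N)), ← inv_div |s| |t|, Real.log_inv, abs_neg]
      at this

end Weight

section Generators

lemma summable_exp_one_sub_abs_int : Summable fun j : ℤ => Real.exp (1 - |(j : ℝ)|) := by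
  have hnat : Summable fun n : ℕ => Real.exp (1 - (n : ℝ)) :=
    (Real.summable_exp_neg_nat.mul_left (Real.exp 1)).congr fun n => by
      rw [← Real.exp_add, ← sub_eq_add_neg]
  exact .of_nat_of_neg (by simpa using hnat) (by simpa using hnat)

lemma sum_exp_neg_abs_le {α : Type*} (S : Finset α) (b : α → ℝ) (A : ℕ)
    (hA : ∀ j : ℤ, (S.filter fun k => ⌊b k⌋ = j).card ≤ A) :
    ∑ k ∈ S, Real.exp (-|b k|) ≤ A * ∑' j : ℤ, Real.exp (1 - |(j : ℝ)|) := by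
  have hterm (k : α) : Real.exp (-|b k|) ≤ Real.exp (1 - |(⌊b k⌋ : ℝ)|) := by
    have hfloor : |(⌊b k⌋ : ℝ)| ≤ |b k| + 1 := by
      have := Int.floor_le (b k)
      have := Int.lt_floor_add_one (b k)
      exact abs_le.mpr ⟨by linarith [neg_abs_le (b k)], by linarith [le_abs_self (b k)]⟩
    exact Real.exp_le_exp.mpr (by linarith)
  calc ∑ k ∈ S, Real.exp (-|b k|)
      ≤ ∑ k ∈ S, Real.exp (1 - |(⌊b k⌋ : ℝ)|) := Finset.sum_le_sum fun k _ => hterm k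
    _ = ∑ j ∈ S.image (⌊b ·⌋), (S.filter fun k => ⌊b k⌋ = j).card • Real.exp (1 - |(j : ℝ)|) :=
        Finset.sum_comp (fun j : ℤ => Real.exp (1 - |(j : ℝ)|)) _
    _ ≤ ∑ j ∈ S.image (⌊b ·⌋), A * Real.exp (1 - |(j : ℝ)|) := by
        gcongr with j
        rw [nsmul_eq_mul]
        gcongr
        exact hA j
    _ ≤ A * ∑' j : ℤ, Real.exp (1 - |(j : ℝ)|) := by
        rw [← Finset.mul_sum]
        gcongr
        exact summable_exp_one_sub_abs_int.sum_le_tsum _ fun _ _ => Real.exp_nonneg _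

variable {K : Type*} [Field K]

/-- The logarithm of `|σ₁ x / σ₂ x|`. Multiplication by units moves the generators of an ideal
along this coordinate, whereas the ideal norm `|σ₁ x| |σ₂ x|` stays fixed. -/
noncomputable def logRatio (σ₁ σ₂ : K →+* ℝ) (x : K) : ℝ := Real.log (|σ₁ x| / |σ₂ x|)

lemma abs_map_pos (σ : K →+* ℝ) {x : K} (hx : x ≠ 0) : 0 < |σ x| :=
  abs_pos.mpr ((map_ne_zero σ).mpr hx)

lemma logRatio_mul (σ₁ σ₂ : K →+* ℝ) {x y : K} (hx : x ≠ 0) (hy : y ≠ 0) :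
    logRatio σ₁ σ₂ (x * y) = logRatio σ₁ σ₂ x + logRatio σ₁ σ₂ y := by
  have := abs_map_pos σ₁ hx
  have := abs_map_pos σ₁ hy
  have := abs_map_pos σ₂ hx
  have := abs_map_pos σ₂ hy
  simp only [logRatio, map_mul, abs_mul]
  rw [mul_div_mul_comm, Real.log_mul (by positivity) (by positivity)]

/-- A real embedding regarded as one of the `ℚ`-algebra maps `K → ℂ` over which the norm is a
product. -/
noncomputable def complexAlgHom [CharZero K] (σ : K →+* ℝ) : K →ₐ[ℚ] ℂ :=
  (Complex.ofRealHom.comp σ).toRatAlgHom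

lemma complexAlgHom_apply [CharZero K] (σ : K →+* ℝ) (x : K) : complexAlgHom σ x = (σ x : ℂ) := rfl

lemma complexAlgHom_injective [CharZero K] :
    Function.Injective (complexAlgHom : (K →+* ℝ) → (K →ₐ[ℚ] ℂ)) := fun _ _ h =>
  RingHom.ext fun x => Complex.ofReal_injective (DFunLike.congr_fun h x)

lemma coe_ne_zero_of_span_eq {n : Ideal (𝓞 K)} (hn : n ≠ ⊥) {k : 𝓞 K} (hk : Ideal.span {k} = n) :
    (k : K) ≠ 0 := by
  intro h
  exact hn (by rw [← hk, RingOfIntegers.coe_eq_zero_iff.mp h, Ideal.span_singleton_eq_bot])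

variable [NumberField K] {σ₁ σ₂ : K →+* ℝ}

lemma univ_algHom_eq_pair (hdeg : Module.finrank ℚ K = 2) (hne : σ₁ ≠ σ₂) :
    (Finset.univ : Finset (K →ₐ[ℚ] ℂ)) = {complexAlgHom σ₁, complexAlgHom σ₂} := by
  refine (Finset.eq_of_subset_of_card_le (Finset.subset_univ _) ?_).symm
  rw [Finset.card_univ, AlgHom.card, hdeg, Finset.card_pair (complexAlgHom_injective.ne hne)]

lemma algebraNorm_eq_mul (hdeg : Module.finrank ℚ K = 2) (hne : σ₁ ≠ σ₂) (x : K) :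
    (Algebra.norm ℚ x : ℝ) = σ₁ x * σ₂ x := by
  have hprod := Algebra.norm_eq_prod_embeddings ℚ ℂ x
  rw [univ_algHom_eq_pair hdeg hne, Finset.prod_pair (complexAlgHom_injective.ne hne)] at hprod
  exact Complex.ofReal_injective (by simpa [complexAlgHom_apply] using hprod)

lemma absNorm_span_eq_abs_mul_abs (hdeg : Module.finrank ℚ K = 2) (hne : σ₁ ≠ σ₂) (k : 𝓞 K) :
    (Ideal.absNorm (Ideal.span {k}) : ℝ) = |σ₁ k| * |σ₂ k| := by
  rw [Ideal.absNorm_span_singleton, ← abs_mul, ← algebraNorm_eq_mul hdeg hne,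
    ← Algebra.coe_norm_int, Nat.cast_natAbs]
  norm_cast

lemma finite_setOf_abs_le (hdeg : Module.finrank ℚ K = 2) (hne : σ₁ ≠ σ₂) (B : ℝ) :
    {k : 𝓞 K | |σ₁ k| ≤ B ∧ |σ₂ k| ≤ B}.Finite := by
  refine Set.Finite.of_finite_image (f := fun k : 𝓞 K => (k : K))
    ((NumberField.Embeddings.finite_of_norm_le K ℂ B).subset ?_)
    RingOfIntegers.coe_injective.injOn
  rintro _ ⟨k, ⟨h₁, h₂⟩, rfl⟩
  refine ⟨k.2, fun φ => ?_⟩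
  have hφ := Finset.mem_univ φ.toRatAlgHom
  rw [univ_algHom_eq_pair hdeg hne, Finset.mem_insert, Finset.mem_singleton] at hφ
  rcases hφ with h | h <;> rw [← RingHom.toRatAlgHom_apply φ, h, complexAlgHom_apply] <;> simpa

lemma finite_units_abs_logRatio_le (hdeg : Module.finrank ℚ K = 2) (hne : σ₁ ≠ σ₂) (B : ℝ) :
    {η : (𝓞 K)ˣ | |logRatio σ₁ σ₂ (η : 𝓞 K)| ≤ B}.Finite := by
  refine Set.Finite.of_finite_image (f := fun η : (𝓞 K)ˣ => (η : 𝓞 K))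
    ((finite_setOf_abs_le hdeg hne (Real.exp B)).subset ?_) Units.val_injective.injOn
  rintro _ ⟨η, hη, rfl⟩
  have hη0 : ((η : 𝓞 K) : K) ≠ 0 := by simp
  have h₁ := abs_map_pos σ₁ hη0
  have h₂ := abs_map_pos σ₂ hη0
  have hsum : Real.log |σ₁ (η : 𝓞 K)| + Real.log |σ₂ (η : 𝓞 K)| = 0 := by
    rw [← Real.log_mul h₁.ne' h₂.ne', ← absNorm_span_eq_abs_mul_abs hdeg hne,
      Ideal.span_singleton_eq_top.mpr η.isUnit, Ideal.absNorm_top, Nat.cast_one, Real.log_one]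
  rw [Set.mem_ofPred_eq, logRatio, Real.log_div h₁.ne' h₂.ne', abs_le] at hη
  exact ⟨(Real.log_le_iff_le_exp h₁).mp (by linarith), (Real.log_le_iff_le_exp h₂).mp (by linarith)⟩

lemma exists_card_generators_floor_logRatio_le (hdeg : Module.finrank ℚ K = 2) (hne : σ₁ ≠ σ₂) :
    ∃ A : ℕ, ∀ n : Ideal (𝓞 K), n ≠ ⊥ → ∀ j : ℤ, ∀ S : Finset (𝓞 K),
      (∀ k ∈ S, Ideal.span {k} = n ∧ ⌊logRatio σ₁ σ₂ k⌋ = j) → S.card ≤ A := by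
  have hfin := finite_units_abs_logRatio_le hdeg hne 1
  refine ⟨hfin.toFinset.card, fun n hn j S hS => ?_⟩
  rcases S.eq_empty_or_nonempty with rfl | ⟨k₀, hk₀⟩
  · exact Nat.zero_le _
  obtain ⟨hspan₀, hfloor₀⟩ := hS k₀ hk₀
  have hunit (k : 𝓞 K) (hk : k ∈ S) : ∃ η : (𝓞 K)ˣ, η ∈ hfin.toFinset ∧ k₀ * η = k := by
    obtain ⟨hspan, hfloor⟩ := hS k hk
    obtain ⟨η, rfl⟩ : Associated k₀ k :=
      Ideal.span_singleton_eq_span_singleton.mp (hspan₀.trans hspan.symm)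
    refine ⟨η, hfin.mem_toFinset.mpr ?_, rfl⟩
    have hmul := logRatio_mul σ₁ σ₂ (coe_ne_zero_of_span_eq hn hspan₀)
      (y := ((η : 𝓞 K) : K)) (by simp)
    have hclose := Int.abs_sub_lt_one_of_floor_eq_floor (hfloor.trans hfloor₀.symm)
    rw [show ((k₀ * (η : 𝓞 K) : 𝓞 K) : K) = k₀ * (η : 𝓞 K) from map_mul (algebraMap (𝓞 K) K) _ _,
      hmul, add_sub_cancel_left] at hclose
    exact hclose.le
  choose! η hη hk₀η using hunit
  refine Finset.card_le_card_of_injOn η hη fun k hk k' hk' heq => ?_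
  rw [← hk₀η k hk, ← hk₀η k' hk', heq]

lemma exists_sum_generators_exp_neg_abs_logRatio_le (hdeg : Module.finrank ℚ K = 2)
    (hne : σ₁ ≠ σ₂) :
    ∃ M : ℝ, ∀ n : Ideal (𝓞 K), n ≠ ⊥ → ∀ S : Finset (𝓞 K), (∀ k ∈ S, Ideal.span {k} = n) →
      ∑ k ∈ S, Real.exp (-|logRatio σ₁ σ₂ k|) ≤ M := by
  obtain ⟨A, hA⟩ := exists_card_generators_floor_logRatio_le hdeg hne
  exact ⟨A * ∑' j : ℤ, Real.exp (1 - |(j : ℝ)|), fun n hn S hS =>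
    sum_exp_neg_abs_le S _ A fun j => hA n hn j _ fun k hk =>
      ⟨hS k (Finset.mem_filter.mp hk).1, (Finset.mem_filter.mp hk).2⟩⟩

end Generators

section Chebyshev

variable {K : Type*} [Field K]

/-- The nonzero prime ideals of `𝓞 K`. -/
abbrev PrimeIdeal (K : Type*) [Field K] : Type _ := {p : Ideal (𝓞 K) // p ≠ ⊥ ∧ p.IsPrime}

variable [NumberField K]

lemma PrimeIdeal.two_le_absNorm (P : PrimeIdeal K) : 2 ≤ Ideal.absNorm P.1 := by
  have hzero : Ideal.absNorm P.1 ≠ 0 := mt Ideal.absNorm_eq_zero_iff.mp P.2.1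
  have hone : Ideal.absNorm P.1 ≠ 1 := mt Ideal.absNorm_eq_one_iff.mp P.2.2.ne_top
  lia

lemma PrimeIdeal.exists_natPrime_dvd_span (P : PrimeIdeal K) :
    ∃ p : ℕ, p.Prime ∧ p ≤ Ideal.absNorm P.1 ∧ P.1 ∣ Ideal.span {(p : 𝓞 K)} := by
  have := P.2.2
  have : NeZero P.1 := ⟨P.2.1⟩
  refine ⟨Ideal.absNorm (P.1.under ℤ), Nat.absNorm_under_prime P.1,
    Nat.le_of_dvd (by linarith [P.two_le_absNorm]) (Int.absNorm_under_dvd_absNorm P.1), ?_⟩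
  exact Ideal.dvd_span_singleton.mpr (mod_cast Int.absNorm_under_mem P.1)

lemma sum_log_absNorm_le_of_dvd_span {p : ℕ} (hp : p ≠ 0) (S : Finset (PrimeIdeal K))
    (hS : ∀ P ∈ S, P.1 ∣ Ideal.span {(p : 𝓞 K)}) :
    ∑ P ∈ S, Real.log (Ideal.absNorm P.1) ≤ Module.finrank ℚ K * Real.log p := by
  have hprime : ∀ Q ∈ S.map (.subtype _), Prime Q := by
    simp only [Finset.mem_map, forall_exists_index, and_imp, forall_apply_eq_imp_iff₂]
    exact fun P _ => Ideal.prime_of_isPrime P.2.1 P.2.2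
  have hdvd : ∏ P ∈ S, P.1 ∣ Ideal.span {(p : 𝓞 K)} := by
    have := Finset.prod_primes_dvd (Ideal.span {(p : 𝓞 K)}) hprime (by simpa using hS)
    rwa [Finset.prod_map] at this
  have hnorm : ∏ P ∈ S, Ideal.absNorm P.1 ∣ p ^ Module.finrank ℚ K := by
    have := map_dvd Ideal.absNorm hdvd
    rwa [map_prod, Ideal.absNorm_span_natCast, RingOfIntegers.rank] at this
  have hpos (P : PrimeIdeal K) : (0 : ℝ) < Ideal.absNorm P.1 := mod_cast
    zero_lt_two.trans_le P.two_le_absNorm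
  rw [← Real.log_prod fun P _ => (hpos P).ne', ← Real.log_pow]
  exact Real.log_le_log (Finset.prod_pos fun P _ => hpos P)
    (mod_cast Nat.le_of_dvd (pow_pos hp.bot_lt _) hnorm)

lemma sum_log_absNorm_le {x : ℝ} (hx : 0 ≤ x) (S : Finset (PrimeIdeal K))
    (hS : ∀ P ∈ S, (Ideal.absNorm P.1 : ℝ) ≤ x) :
    ∑ P ∈ S, Real.log (Ideal.absNorm P.1) ≤ Module.finrank ℚ K * Real.log 4 * x := by
  choose r hr hrle hrdvd using fun P : PrimeIdeal K => P.exists_natPrime_dvd_span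
  have hmaps : ∀ P ∈ S, r P ∈ (Finset.Ioc 0 ⌊x⌋₊).filter Nat.Prime := fun P hP =>
    Finset.mem_filter.mpr ⟨Finset.mem_Ioc.mpr ⟨(hr P).pos,
      Nat.le_floor ((Nat.cast_le.mpr (hrle P)).trans (hS P hP))⟩, hr P⟩
  calc ∑ P ∈ S, Real.log (Ideal.absNorm P.1)
      = ∑ p ∈ Finset.Ioc 0 ⌊x⌋₊ with p.Prime, ∑ P ∈ S with r P = p,
          Real.log (Ideal.absNorm P.1) := (Finset.sum_fiberwise_of_maps_to hmaps _).symm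
    _ ≤ ∑ p ∈ Finset.Ioc 0 ⌊x⌋₊ with p.Prime, Module.finrank ℚ K * Real.log p := by
        refine Finset.sum_le_sum fun p hp => ?_
        refine sum_log_absNorm_le_of_dvd_span (Finset.mem_filter.mp hp).2.ne_zero _ fun P hP => ?_
        rw [← (Finset.mem_filter.mp hP).2]
        exact hrdvd P
    _ = Module.finrank ℚ K * Chebyshev.theta x := by rw [← Finset.mul_sum, Chebyshev.theta]
    _ ≤ Module.finrank ℚ K * Real.log 4 * x := by
        rw [mul_assoc]
        gcongr
        exact Chebyshev.theta_le_log4_mul_x hx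

/-- The term `log 𝒩(𝔭) · min(1, (𝒩(𝔭)/N)^{-3/2})`, which majorizes, up to constants, every prime
ideal sum below. -/
noncomputable def primeWeight (N : ℝ) (P : PrimeIdeal K) : ℝ :=
  Real.log (Ideal.absNorm P.1) * decay (Ideal.absNorm P.1 / N)

variable {N : ℝ}

lemma primeWeight_nonneg (hN : 0 ≤ N) (P : PrimeIdeal K) : 0 ≤ primeWeight N P :=
  mul_nonneg (Real.log_natCast_nonneg _) (decay_nonneg (by positivity))

lemma sum_primeWeight_le (hN : 0 < N) (S : Finset (PrimeIdeal K)) :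
    ∑ P ∈ S, primeWeight N P ≤ 16 * (Module.finrank ℚ K * Real.log 4 * N) := by
  refine sum_mul_decay_le S _ _ _ (fun P => Real.log_natCast_nonneg _) fun x hx => ?_
  rw [mul_assoc _ N x]
  refine sum_log_absNorm_le (by positivity) _ fun P hP => ?_
  rw [mul_comm, ← div_le_iff₀ hN]
  exact (Finset.mem_filter.mp hP).2

lemma summable_primeWeight (hN : 0 < N) : Summable (primeWeight N : PrimeIdeal K → ℝ) :=
  summable_of_sum_le (primeWeight_nonneg hN.le) (sum_primeWeight_le hN)

lemma tsum_primeWeight_le (hN : 0 < N) :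
    ∑' P : PrimeIdeal K, primeWeight N P ≤ 16 * (Module.finrank ℚ K * Real.log 4 * N) :=
  Real.tsum_le_of_sum_le (primeWeight_nonneg hN.le) (sum_primeWeight_le hN)

end Chebyshev

section PrimePowers

lemma hasSum_prod_nat {α : Type*} {f : α × ℕ → ℝ} {a b : ℝ} (hzero : HasSum (fun x => f (x, 0)) a)
    (hsucc : HasSum (fun p : α × ℕ => f (p.1, p.2 + 1)) b) : HasSum f (a + b) := by
  have hinj₀ : Function.Injective fun x : α => (x, 0) := Prod.mk_left_injective 0
  have hinj₁ : Function.Injective fun p : α × ℕ => (p.1, p.2 + 1) :=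
    Function.injective_id.prodMap Nat.succ_injective
  have hcompl : IsCompl (Set.range fun x : α => (x, 0))
      (Set.range fun p : α × ℕ => (p.1, p.2 + 1)) := by
    rw [isCompl_iff, Set.disjoint_left, codisjoint_iff_le_sup]
    refine ⟨?_, ?_⟩
    · rintro _ ⟨x, rfl⟩ ⟨p, hp⟩
      exact Nat.succ_ne_zero _ (congrArg Prod.snd hp)
    · rintro ⟨x, _ | j⟩ -
      · exact .inl ⟨x, rfl⟩
      · exact .inr ⟨(x, j), rfl⟩
  exact (hinj₀.hasSum_range_iff.mpr hzero).add_isCompl hcompl (hinj₁.hasSum_range_iff.mpr hsucc)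

lemma primeIdeal_pow_succ_injective {K : Type*} [Field K] [NumberField K] :
    Function.Injective fun x : PrimeIdeal K × ℕ => x.1.1 ^ (x.2 + 1) := by
  rintro ⟨P, i⟩ ⟨Q, j⟩ h
  obtain rfl : P = Q := Subtype.ext (eq_of_prime_pow_eq (Ideal.prime_of_isPrime P.2.1 P.2.2)
    (Ideal.prime_of_isPrime Q.2.1 Q.2.2) i.succ_pos h)
  have := (Ideal.pow_right_strictAnti P.1 P.2.1 P.2.2.ne_top).injective h
  exact Prod.ext rfl (Nat.succ_injective this)

variable {K : Subfield ℝ} [NumberField K]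

lemma lambdaIdeal_pow (P : PrimeIdeal K) {k : ℕ} (hk : k ≠ 0) :
    LambdaIdeal K (P.1 ^ k) = Real.log (Ideal.absNorm P.1) := by
  have h : ∃ p : Ideal (𝓞 K), (∃ l : ℕ, 1 ≤ l ∧ P.1 ^ k = p ^ l) ∧ p.IsPrime ∧ p ≠ ⊥ :=
    ⟨P.1, ⟨k, Nat.one_le_iff_ne_zero.mpr hk, rfl⟩, P.2.2, P.2.1⟩
  obtain ⟨⟨l, -, hpow⟩, hprime, hbot⟩ := h.choose_spec
  rw [LambdaIdeal, dif_pos h, ← eq_of_prime_pow_eq (Ideal.prime_of_isPrime P.2.1 P.2.2)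
    (Ideal.prime_of_isPrime hbot hprime) hk.bot_lt hpow]

lemma exists_pow_succ_eq_of_lambdaIdeal_ne_zero {n : Ideal (𝓞 K)} (hn : LambdaIdeal K n ≠ 0) :
    ∃ x : PrimeIdeal K × ℕ, x.1.1 ^ (x.2 + 1) = n := by
  by_contra hpow
  refine hn (dif_neg ?_)
  rintro ⟨p, ⟨k, hk, rfl⟩, hprime, hbot⟩
  exact hpow ⟨(⟨p, hbot, hprime⟩, k - 1), by rw [Nat.sub_add_cancel hk]⟩

lemma lambdaIdeal_bot : LambdaIdeal K ⊥ = 0 := by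
  by_contra h
  obtain ⟨x, hx⟩ := exists_pow_succ_eq_of_lambdaIdeal_ne_zero h
  exact pow_ne_zero (x.2 + 1) x.1.2.1 hx

lemma hasSum_lambdaIdeal_mul {ψ : Ideal (𝓞 K) → ℝ} {a b : ℝ}
    (hprime : HasSum (fun P : PrimeIdeal K => Real.log (Ideal.absNorm P.1) * ψ P.1) a)
    (hpow : HasSum (fun x : PrimeIdeal K × ℕ =>
      Real.log (Ideal.absNorm x.1.1) * ψ (x.1.1 ^ (x.2 + 2))) b) :
    HasSum (fun n => LambdaIdeal K n * ψ n) (a + b) := by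
  rw [← primeIdeal_pow_succ_injective.hasSum_iff]
  · simp only [Function.comp_def, lambdaIdeal_pow _ (Nat.succ_ne_zero _)]
    exact hasSum_prod_nat (by simpa using hprime) hpow
  · intro n hn
    rw [of_not_not (mt exists_pow_succ_eq_of_lambdaIdeal_ne_zero hn), zero_mul]

end PrimePowers

section Comparison

variable {K : Type*} [Field K] [NumberField K]

/-- A nonnegative weight `ψ` on the nonzero ideals, concentrated where `𝒩(𝔫)` has the size of `N`:
the factor `(1 + |log (𝒩(𝔫)/N)|)²` pays twice for exchanging `log 𝒩(𝔫)` and `log N`. -/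
def ConcentratedAt (N c : ℝ) (ψ : Ideal (𝓞 K) → ℝ) : Prop :=
  ∀ n ≠ ⊥, 0 ≤ ψ n ∧ ψ n * (1 + |Real.log (Ideal.absNorm n / N)|) ^ 2
    ≤ c * decay (Ideal.absNorm n / N)

lemma half_lt_log {q : ℝ} (hq : 2 ≤ q) : 1 / 2 < Real.log q := by
  linarith [Real.log_two_gt_d9, Real.log_le_log two_pos hq]

lemma log_le_two_mul_log_mul {q N : ℝ} (hq : 2 ≤ q) (hN : 0 < N) :
    Real.log N ≤ 2 * Real.log q * (1 + |Real.log (q / N)|) := by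
  have hsplit : Real.log (q / N) = Real.log q - Real.log N :=
    Real.log_div (by linarith) hN.ne'
  nlinarith [half_lt_log hq, neg_abs_le (Real.log (q / N)), abs_nonneg (Real.log (q / N))]

lemma hasSum_add_two_mul_half_pow : HasSum (fun j : ℕ => ((j : ℝ) + 2) * (1 / 2) ^ j) 6 := by
  have hlinear : HasSum (fun j : ℕ => (j : ℝ) * (1 / 2) ^ j) 2 := by
    have := hasSum_coe_mul_geometric_of_norm_lt_one (r := (1 / 2 : ℝ)) (by norm_num)
    rwa [show (1 : ℝ) / 2 / (1 - 1 / 2) ^ 2 = 2 by norm_num] at this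
  simpa only [add_mul, show (2 : ℝ) + 2 * 2 = 6 by norm_num] using
    hlinear.add (hasSum_geometric_two.mul_left 2)

/-- The majorant of the term of `∑ Λ(𝔫)Ψ(𝔫)` at `𝔫 = 𝔭^(j + 2)`, up to a factor of size
`N / log N`. -/
noncomputable def primePowerWeight (x : PrimeIdeal K × ℕ) : ℝ :=
  primeWeight 1 x.1 * ((x.2 + 2) * (1 / 2) ^ x.2)

lemma hasSum_primePowerWeight :
    HasSum (primePowerWeight (K := K)) ((∑' P : PrimeIdeal K, primeWeight 1 P) * 6) := by
  have hweight := summable_primeWeight (K := K) one_pos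
  have hprod := hweight.mul_of_nonneg hasSum_add_two_mul_half_pow.summable
    (primeWeight_nonneg zero_le_one) fun _ => by positivity
  exact HasSum.mul (f := primeWeight 1) (g := fun j : ℕ => ((j : ℝ) + 2) * (1 / 2) ^ j)
    hweight.hasSum hasSum_add_two_mul_half_pow hprod

variable {N c : ℝ} {ψ : Ideal (𝓞 K) → ℝ}

namespace ConcentratedAt

lemma const_nonneg (hψ : ConcentratedAt N c ψ) (hN : 0 < N) : 0 ≤ c := by
  obtain ⟨hnonneg, hle⟩ := hψ ⊤ top_ne_bot
  rw [Ideal.absNorm_top, Nat.cast_one] at hle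
  exact nonneg_of_mul_nonneg_left ((mul_nonneg hnonneg (sq_nonneg _)).trans hle)
    (decay_pos (one_div_pos.mpr hN))

lemma mul_one_add_abs_log_le (hψ : ConcentratedAt N c ψ) {n : Ideal (𝓞 K)} (hn : n ≠ ⊥) :
    ψ n * (1 + |Real.log (Ideal.absNorm n / N)|) ≤ c * decay (Ideal.absNorm n / N) := by
  obtain ⟨hnonneg, hle⟩ := hψ n hn
  refine (mul_le_mul_of_nonneg_left (le_self_pow₀ ?_ two_ne_zero) hnonneg).trans hle
  linarith [abs_nonneg (Real.log (Ideal.absNorm n / N))]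

lemma log_mul_prime_le (hψ : ConcentratedAt N c ψ) (P : PrimeIdeal K) :
    Real.log (Ideal.absNorm P.1) * ψ P.1 ≤ c * primeWeight N P := by
  have hle : ψ P.1 ≤ c * decay (Ideal.absNorm P.1 / N) := by
    refine le_trans (le_mul_of_one_le_right (hψ P.1 P.2.1).1 ?_) (hψ.mul_one_add_abs_log_le P.2.1)
    linarith [abs_nonneg (Real.log (Ideal.absNorm P.1 / N))]
  rw [primeWeight, mul_left_comm]
  gcongr

lemma prime_le_two_mul_log_mul_prime (hψ : ConcentratedAt N c ψ) (P : PrimeIdeal K) :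
    ψ P.1 ≤ 2 * (Real.log (Ideal.absNorm P.1) * ψ P.1) := by
  have hlog := half_lt_log (q := Ideal.absNorm P.1) (mod_cast P.two_le_absNorm)
  nlinarith [(hψ P.1 P.2.1).1]

lemma abs_prime_sub_le (hψ : ConcentratedAt N c ψ) (hN : 1 < N) (P : PrimeIdeal K) :
    |ψ P.1 - 1 / Real.log N * (Real.log (Ideal.absNorm P.1) * ψ P.1)|
      ≤ 2 * c / Real.log N ^ 2 * primeWeight N P := by
  have hq : (2 : ℝ) ≤ Ideal.absNorm P.1 := mod_cast P.two_le_absNorm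
  obtain ⟨hnonneg, hle⟩ := hψ P.1 P.2.1
  rw [primeWeight]
  set q := ((Ideal.absNorm P.1 : ℕ) : ℝ)
  have hlogN : 0 < Real.log N := Real.log_pos hN
  have hlogq : 0 < Real.log q := Real.log_pos (by linarith)
  have hdiff : ψ P.1 - 1 / Real.log N * (Real.log q * ψ P.1)
      = -(ψ P.1 * Real.log (q / N) / Real.log N) := by
    rw [Real.log_div (by linarith) (by linarith)]
    field_simp
    ring
  rw [hdiff, abs_neg, abs_div, abs_mul, abs_of_nonneg hnonneg, abs_of_pos hlogN,
    div_mul_eq_mul_div, div_le_div_iff₀ hlogN (by positivity)]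
  calc ψ P.1 * |Real.log (q / N)| * Real.log N ^ 2
      = ψ P.1 * |Real.log (q / N)| * Real.log N * Real.log N := by ring
    _ ≤ ψ P.1 * (1 + |Real.log (q / N)|) * (2 * Real.log q * (1 + |Real.log (q / N)|)) *
          Real.log N := by
        gcongr
        · linarith
        · exact log_le_two_mul_log_mul hq (by linarith)
    _ = 2 * Real.log q * (ψ P.1 * (1 + |Real.log (q / N)|) ^ 2) * Real.log N := by ring
    _ ≤ 2 * Real.log q * (c * decay (q / N)) * Real.log N := by gcongr
    _ = 2 * c * (Real.log q * decay (q / N)) * Real.log N := by ring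

lemma log_mul_pow_le (hψ : ConcentratedAt N c ψ) (hN : 1 < N) (x : PrimeIdeal K × ℕ) :
    Real.log (Ideal.absNorm x.1.1) * ψ (x.1.1 ^ (x.2 + 2))
      ≤ 4 * c * N / Real.log N * primePowerWeight x := by
  obtain ⟨P, j⟩ := x
  have hq : (2 : ℝ) ≤ Ideal.absNorm P.1 := mod_cast P.two_le_absNorm
  have hbot : P.1 ^ (j + 2) ≠ ⊥ := pow_ne_zero _ P.2.1
  have hnonneg := (hψ _ hbot).1
  have hle := hψ.mul_one_add_abs_log_le hbot
  have hN0 : 0 < N := by linarith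
  have hc := hψ.const_nonneg hN0
  rw [map_pow, Nat.cast_pow] at hle
  rw [primePowerWeight, primeWeight, div_one]
  set q := ((Ideal.absNorm P.1 : ℕ) : ℝ)
  have hlogN : 0 < Real.log N := Real.log_pos hN
  have hlogq : 0 < Real.log q := Real.log_pos (by linarith)
  have hswap : Real.log N ≤ 2 * ((j + 2) * Real.log q) * (1 + |Real.log (q ^ (j + 2) / N)|) := by
    have := log_le_two_mul_log_mul (hq.trans (le_self_pow₀ (by linarith) (by lia : j + 2 ≠ 0))) hN0
    rwa [Real.log_pow, Nat.cast_add, Nat.cast_two] at this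
  have hinv : decay (q ^ (j + 2) / N) ≤ N / q ^ (j + 2) :=
    (decay_le_inv (by positivity)).trans_eq (one_div_div _ _)
  have hgeom : 1 / q ^ j ≤ (1 / 2) ^ j := by
    rw [← one_div_pow]
    gcongr
  rw [div_mul_eq_mul_div, le_div_iff₀ hlogN]
  calc Real.log q * ψ (P.1 ^ (j + 2)) * Real.log N
      ≤ Real.log q * ψ (P.1 ^ (j + 2)) *
          (2 * ((j + 2) * Real.log q) * (1 + |Real.log (q ^ (j + 2) / N)|)) := by gcongr
    _ = 2 * (j + 2) * Real.log q ^ 2 *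
          (ψ (P.1 ^ (j + 2)) * (1 + |Real.log (q ^ (j + 2) / N)|)) := by ring
    _ ≤ 2 * (j + 2) * Real.log q ^ 2 * (c * (N / q ^ (j + 2))) :=
        mul_le_mul_of_nonneg_left (hle.trans (by gcongr)) (by positivity)
    _ = 2 * c * N * (Real.log q * (Real.log q / q ^ 2)) * ((j + 2) * (1 / q ^ j)) := by
        rw [pow_add]
        field_simp
    _ ≤ 2 * c * N * (Real.log q * (2 * decay q)) * ((j + 2) * (1 / 2) ^ j) := by
        have := log_div_sq_le_decay (y := q) (by linarith)
        have := decay_nonneg (y := q) (by linarith)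
        gcongr
    _ = 4 * c * N * (Real.log q * decay q * ((j + 2) * (1 / 2) ^ j)) := by ring

lemma summable_log_mul_prime (hψ : ConcentratedAt N c ψ) (hN : 0 < N) :
    Summable fun P : PrimeIdeal K => Real.log (Ideal.absNorm P.1) * ψ P.1 :=
  .of_nonneg_of_le (fun P => mul_nonneg (Real.log_natCast_nonneg _) (hψ P.1 P.2.1).1)
    hψ.log_mul_prime_le ((summable_primeWeight hN).mul_left c)

lemma summable_prime (hψ : ConcentratedAt N c ψ) (hN : 0 < N) :
    Summable fun P : PrimeIdeal K => ψ P.1 :=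
  .of_nonneg_of_le (fun P => (hψ P.1 P.2.1).1) hψ.prime_le_two_mul_log_mul_prime
    ((hψ.summable_log_mul_prime hN).mul_left 2)

lemma log_mul_pow_nonneg (hψ : ConcentratedAt N c ψ) (P : PrimeIdeal K) (k : ℕ) :
    0 ≤ Real.log (Ideal.absNorm P.1) * ψ (P.1 ^ k) :=
  mul_nonneg (Real.log_natCast_nonneg _) (hψ _ (pow_ne_zero k P.2.1)).1

lemma summable_log_mul_pow (hψ : ConcentratedAt N c ψ) (hN : 1 < N) :
    Summable fun x : PrimeIdeal K × ℕ => Real.log (Ideal.absNorm x.1.1) * ψ (x.1.1 ^ (x.2 + 2)) :=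
  .of_nonneg_of_le (fun x => hψ.log_mul_pow_nonneg x.1 (x.2 + 2)) (hψ.log_mul_pow_le hN)
    (hasSum_primePowerWeight.summable.mul_left _)

lemma abs_tsum_prime_sub_le (hψ : ConcentratedAt N c ψ) (hN : 1 < N) :
    |∑' P : PrimeIdeal K, ψ P.1 -
        1 / Real.log N * ∑' P : PrimeIdeal K, Real.log (Ideal.absNorm P.1) * ψ P.1|
      ≤ 32 * (Module.finrank ℚ K * Real.log 4) * (c * N / Real.log N ^ 2) := by
  have hN0 : 0 < N := by linarith
  have hc := hψ.const_nonneg hN0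
  rw [← tsum_mul_left, ← (hψ.summable_prime hN0).tsum_sub
    ((hψ.summable_log_mul_prime hN0).mul_left _)]
  have hbound := tsum_of_norm_bounded
    ((summable_primeWeight hN0).mul_left (2 * c / Real.log N ^ 2)).hasSum
    fun P => (Real.norm_eq_abs _).trans_le (hψ.abs_prime_sub_le hN P)
  rw [Real.norm_eq_abs, tsum_mul_left] at hbound
  calc _ ≤ 2 * c / Real.log N ^ 2 * ∑' P : PrimeIdeal K, primeWeight N P := hbound
    _ ≤ 2 * c / Real.log N ^ 2 * (16 * (Module.finrank ℚ K * Real.log 4 * N)) := by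
        gcongr
        exact tsum_primeWeight_le hN0
    _ = 32 * (Module.finrank ℚ K * Real.log 4) * (c * N / Real.log N ^ 2) := by ring

lemma tsum_log_mul_pow_le (hψ : ConcentratedAt N c ψ) (hN : 1 < N) :
    ∑' x : PrimeIdeal K × ℕ, Real.log (Ideal.absNorm x.1.1) * ψ (x.1.1 ^ (x.2 + 2))
      ≤ 384 * (Module.finrank ℚ K * Real.log 4) * (c * N / Real.log N) := by
  have hc := hψ.const_nonneg (zero_lt_one.trans hN)
  have hlogN : 0 < Real.log N := Real.log_pos hN
  calc ∑' x : PrimeIdeal K × ℕ, Real.log (Ideal.absNorm x.1.1) * ψ (x.1.1 ^ (x.2 + 2))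
      ≤ 4 * c * N / Real.log N * ((∑' P : PrimeIdeal K, primeWeight 1 P) * 6) :=
        hasSum_le (hψ.log_mul_pow_le hN) (hψ.summable_log_mul_pow hN).hasSum
          (hasSum_primePowerWeight.mul_left _)
    _ ≤ 4 * c * N / Real.log N * (16 * (Module.finrank ℚ K * Real.log 4 * 1) * 6) := by
        gcongr
        exact tsum_primeWeight_le one_pos
    _ = 384 * (Module.finrank ℚ K * Real.log 4) * (c * N / Real.log N) := by ring

end ConcentratedAt

end Comparison

lemma ConcentratedAt.abs_tsum_prime_sub_tsum_lambdaIdeal_le {K : Subfield ℝ} [NumberField K]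
    {N c : ℝ} {ψ : Ideal (𝓞 K) → ℝ} (hψ : ConcentratedAt N c ψ) (hN : 1 < N) :
    |∑' P : PrimeIdeal K, ψ P.1 - 1 / Real.log N * ∑' n, LambdaIdeal K n * ψ n|
      ≤ 416 * (Module.finrank ℚ K * Real.log 4) * (c * N / Real.log N ^ 2) := by
  have hlogN : 0 < Real.log N := Real.log_pos hN
  have hN0 : 0 < N := zero_lt_one.trans hN
  have hΛ := hasSum_lambdaIdeal_mul (hψ.summable_log_mul_prime hN0).hasSum
    (hψ.summable_log_mul_pow hN).hasSum
  have hpow_nonneg : 0 ≤ ∑' x : PrimeIdeal K × ℕ,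
      Real.log (Ideal.absNorm x.1.1) * ψ (x.1.1 ^ (x.2 + 2)) :=
    tsum_nonneg fun x => hψ.log_mul_pow_nonneg x.1 (x.2 + 2)
  rw [hΛ.tsum_eq, mul_add, ← sub_sub]
  calc _ ≤ _ := abs_sub _ _
    _ ≤ 32 * (Module.finrank ℚ K * Real.log 4) * (c * N / Real.log N ^ 2) +
          1 / Real.log N * (384 * (Module.finrank ℚ K * Real.log 4) * (c * N / Real.log N)) := by
        rw [abs_of_nonneg (a := 1 / Real.log N * _) (by positivity)]
        gcongr
        · exact hψ.abs_tsum_prime_sub_le hN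
        · exact hψ.tsum_log_mul_pow_le hN
    _ = 416 * (Module.finrank ℚ K * Real.log 4) * (c * N / Real.log N ^ 2) := by
        field_simp
        ring

section PsiW

variable {K : Subfield ℝ} {σ₂ : K →+* ℝ} {C : ℕ}

lemma psiW_summand_nonneg (N : ℝ) (n : Ideal (𝓞 K)) (k : 𝓞 K) :
    0 ≤ if Ideal.span {k} = n then
      fwt C (((k : K) : ℝ) / √N) * fwt C (σ₂ (k : K) / √N) else 0 := by
  split_ifs
  · exact mul_nonneg (fwt_nonneg C _) (fwt_nonneg C _)
  · exact le_rfl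

variable [NumberField K]

lemma psiW_nonneg (N : ℝ) (n : Ideal (𝓞 K)) : 0 ≤ PsiW K σ₂ C N n :=
  tsum_nonneg (psiW_summand_nonneg N n)

lemma exists_concentratedAt_psiW (hdeg : Module.finrank ℚ K = 2) (hne : σ₂ ≠ K.subtype)
    (hC : 0 < C) : ∃ c : ℝ, ∀ N : ℝ, 0 < N → ConcentratedAt N c (PsiW K σ₂ C N) := by
  obtain ⟨M, hM⟩ := exists_sum_generators_exp_neg_abs_logRatio_le hdeg hne.symm
  refine ⟨16 * M, fun N hN n hn => ⟨psiW_nonneg N n, ?_⟩⟩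
  set y : ℝ := Ideal.absNorm n / N
  have hL : 0 < (1 + |Real.log y|) ^ 2 := by positivity
  have hy : 0 ≤ decay y := decay_nonneg (by positivity)
  have hgenerator (k : 𝓞 K) (hk : Ideal.span {k} = n) :
      fwt C (K.subtype k / √N) * fwt C (σ₂ k / √N) * (1 + |Real.log y|) ^ 2
        ≤ 16 * decay y * Real.exp (-|logRatio K.subtype σ₂ k|) := by
    have hk0 := coe_ne_zero_of_span_eq hn hk
    have hnorm := absNorm_span_eq_abs_mul_abs hdeg hne.symm k
    rw [hk] at hnorm
    have := fwt_mul_fwt_le hC ((map_ne_zero K.subtype).mpr hk0) ((map_ne_zero σ₂).mpr hk0) hN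
    rwa [← hnorm] at this
  rw [← le_div_iff₀ hL, PsiW]
  refine Real.tsum_le_of_sum_le (psiW_summand_nonneg N n) fun S => ?_
  rw [← Finset.sum_filter, le_div_iff₀ hL, Finset.sum_mul]
  calc _ ≤ ∑ k ∈ S with Ideal.span {k} = n,
        16 * decay y * Real.exp (-|logRatio K.subtype σ₂ k|) :=
      Finset.sum_le_sum fun k hk => hgenerator k (Finset.mem_filter.mp hk).2
    _ = 16 * decay y * ∑ k ∈ S with Ideal.span {k} = n,
        Real.exp (-|logRatio K.subtype σ₂ k|) := by rw [Finset.mul_sum]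
    _ ≤ 16 * decay y * M := by
      gcongr
      exact hM n hn _ fun k hk => (Finset.mem_filter.mp hk).2
    _ = 16 * M * decay y := by ring

end PsiW

lemma ne_subtype_of_map_eq_neg {K : Subfield ℝ} {σ₂ : K →+* ℝ} {r : ℝ} (hr : r ≠ 0) {x : K}
    (hx : (x : ℝ) = r) (hσ₂ : σ₂ x = -r) : σ₂ ≠ K.subtype := by
  rintro rfl
  exact hr (self_eq_neg.mp (hx.symm.trans hσ₂))

lemma exists_le_mul_log_log {g : ℝ → ℝ} (hg : ∃ c : ℝ, ∀ N, 1 < N → g N ≤ c * N / Real.log N ^ 2) :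
    ∃ c : ℝ, ∀ N, 3 ≤ N → g N ≤ c * N * Real.log (Real.log N) / Real.log N ^ 2 := by
  obtain ⟨c, hc⟩ := hg
  have hloglog3 : 0 < Real.log (Real.log 3) := Real.log_pos
    ((Real.lt_log_iff_exp_lt (by norm_num)).mpr (by linarith [Real.exp_one_lt_d9]))
  refine ⟨|c| / Real.log (Real.log 3), fun N hN => ?_⟩
  have hloglog : Real.log (Real.log 3) ≤ Real.log (Real.log N) :=
    Real.log_le_log (Real.log_pos (by norm_num)) (Real.log_le_log (by norm_num) hN)
  calc g N ≤ c * N / Real.log N ^ 2 := hc N (by linarith)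
    _ ≤ |c| / Real.log (Real.log 3) * N * Real.log (Real.log 3) / Real.log N ^ 2 := by
      rw [div_mul_eq_mul_div, div_mul_cancel₀ _ hloglog3.ne']
      gcongr
      exact le_abs_self c
    _ ≤ |c| / Real.log (Real.log 3) * N * Real.log (Real.log N) / Real.log N ^ 2 := by gcongr

theorem psi_prime_sum_vs_lambda_sum_general (K : Subfield ℝ) [NumberField K]
    (hdeg : Module.finrank ℚ K = 2) (σ₂ : K →+* ℝ) (hne : σ₂ ≠ K.subtype)
    (C : ℕ) (hC : 0 < C) :
    ∃ c : ℝ, ∀ N : ℝ, 1 < N →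
      |(∑' s : {p : Ideal (𝓞 K) // p ≠ ⊥ ∧ p.IsPrime}, PsiW K σ₂ C N s.1) -
          (1 / Real.log N) *
            ∑' n : Ideal (𝓞 K), if n ≠ ⊥ then LambdaIdeal K n * PsiW K σ₂ C N n else 0|
        ≤ c * N / Real.log N ^ 2 := by
  obtain ⟨c, hψ⟩ := exists_concentratedAt_psiW hdeg hne hC
  refine ⟨416 * (Module.finrank ℚ K * Real.log 4) * c, fun N hN => ?_⟩
  have hΛ (n : Ideal (𝓞 K)) : (if n ≠ ⊥ then LambdaIdeal K n * PsiW K σ₂ C N n else 0)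
      = LambdaIdeal K n * PsiW K σ₂ C N n :=
    ite_eq_left_iff.mpr fun hn => by rw [not_not.mp hn, lambdaIdeal_bot, zero_mul]
  simp only [hΛ]
  exact ((hψ N (by linarith)).abs_tsum_prime_sub_tsum_lambdaIdeal_le hN).trans_eq (by ring)

/-- **Reduction of the prime-ideal sum of `Ψ` to the `Λ`-weighted sum:**
`∑_{𝔰∈ℙ} Ψ(𝔰) = (1/log N) ∑_{𝔫∈ℐ} Λ(𝔫)Ψ(𝔫) + O(N log log N / log² N)`. -/
theorem psi_prime_sum_vs_lambda_sum
    (d : ℕ) (hd : 1 < d) (hdsq : Squarefree d) (hd4 : d % 4 = 3)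
    (K : Subfield ℝ) [NumberField K]
    (hdeg : Module.finrank ℚ K = 2)
    (sq : 𝓞 K) (hsq : ((sq : K) : ℝ) = Real.sqrt d)
    (hclass : NumberField.classNumber K = 1)
    (σ₂ : K →+* ℝ) (hσ₂ : σ₂ (sq : K) = -Real.sqrt d)
    (C : ℕ) (hC : 0 < C) :
    ∃ c : ℝ, ∀ N : ℝ, 3 ≤ N →
      |(∑' s : {p : Ideal (𝓞 K) // p ≠ ⊥ ∧ p.IsPrime}, PsiW K σ₂ C N s.1) -
          (1 / Real.log N) *
            ∑' n : Ideal (𝓞 K), if n ≠ ⊥ then LambdaIdeal K n * PsiW K σ₂ C N n else 0|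
        ≤ c * N * Real.log (Real.log N) / (Real.log N)^2 := by
  exact exists_le_mul_log_log (psi_prime_sum_vs_lambda_sum_general K hdeg σ₂
    (ne_subtype_of_map_eq_neg (by positivity) hsq hσ₂) C hC)
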